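/- Let A ⊆ B be rings of integers of global fields such that B is a finitely generated A-module. Let G be a finite subgroup of GL_n(A), regarded also as a subgroup of GL_n(B) via the inclusion GL_n(A) ⊆ GL_n(B). Let G act linearly on R = A[X_1,...,X_n] and on T = B[X_1,...,X_n]. Then R^G is Cohen-Macaulay if and only if T^G is Cohen-Macaulay. -/

import Mathlib

/-- A Noetherian local ring is Cohen–Macaulay if it admits a regular sequence, consisting of
elements of the maximal ideal, whose length equals the Krull dimension of the ring. -/
def IsCohenMacaulayLocalRing (R : Type*) [CommRing R] [IsLocalRing R] : Prop :=
  ∃ (n : ℕ) (rs : List R), ringKrullDim R = n ∧ rs.length = n ∧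
    (∀ x ∈ rs, x ∈ IsLocalRing.maximalIdeal R) ∧ RingTheory.Sequence.IsRegular R rs

/-- A Noetherian ring is Cohen–Macaulay if all its localizations at prime ideals are
Cohen–Macaulay local rings. -/
def IsCohenMacaulayRing (R : Type*) [CommRing R] : Prop :=
  IsNoetherianRing R ∧
    ∀ (P : Ideal R) (_ : P.IsPrime), IsCohenMacaulayLocalRing (Localization.AtPrime P)

/-- The ring of invariants `R^G` of a subgroup `G ⊆ GL_n(A)` acting linearly on the
polynomial ring `R = A[X_1, …, X_n]` (fixing `A`), via the standard action of `GL_n(A)`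
on the `A`-span of `X_1, …, X_n`. -/
noncomputable def glInvariants {A : Type*} [CommRing A] {n : ℕ}
    (G : Subgroup (Matrix.GeneralLinearGroup (Fin n) A)) :
    Subalgebra A (MvPolynomial (Fin n) A) where
  carrier := {f | ∀ g ∈ G,
    MvPolynomial.aeval
      (fun i => ∑ j, ((g : Matrix (Fin n) (Fin n) A) i j) • MvPolynomial.X j) f = f}
  mul_mem' := by
    intro a b ha hb g hg
    rw [map_mul, ha g hg, hb g hg]
  add_mem' := by
    intro a b ha hb g hg
    rw [map_add, ha g hg, hb g hg]
  algebraMap_mem' := fun a g _ => MvPolynomial.aeval_C _ a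

/-- Witness that `A` is (isomorphic to) the ring of integers of a number field. -/
structure NumberRingOfIntegersData (A : Type*) [CommRing A] where
  K : Type
  [fieldK : Field K]
  numberField : NumberField K
  equiv : A ≃+* NumberField.RingOfIntegers K

/-- Witness that `A` is (isomorphic to) the ring of integers of a global function field,
i.e. the integral closure of `F_q[t]` in a finite extension of `F_q(t)`. -/
structure FunctionRingOfIntegersData (A : Type*) [CommRing A] where
  Fq : Type
  K : Type
  [fieldFq : Field Fq]
  [finiteFq : Finite Fq]
  [fieldK : Field K]
  [algP : Algebra (Polynomial Fq) K]
  [algR : Algebra (RatFunc Fq) K]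
  [tower : IsScalarTower (Polynomial Fq) (RatFunc Fq) K]
  functionField : FunctionField Fq K
  equiv : A ≃+* ↥(FunctionField.ringOfIntegers Fq K)

/-- `A` is the ring of integers of a global field (a number field or a global function
field). -/
def IsRingOfIntegersOfGlobalField (A : Type*) [CommRing A] : Prop :=
  Nonempty (NumberRingOfIntegersData A) ∨ Nonempty (FunctionRingOfIntegersData A)


section PartA
open CategoryTheory Abelian TensorProduct RingTheory.Sequence

/-- Descent of regular sequences along a flat local homomorphism with zero-dimensional fibre. -/
lemma exists_isRegular_of_ext_baseChange {C D : Type} [CommRing C] [CommRing D]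
    [IsLocalRing C] [IsLocalRing D] [IsNoetherianRing C] [IsNoetherianRing D]
    [Algebra C D] [Module.FaithfullyFlat C D] (n : ℕ) (M : Type) [AddCommGroup M] [Module C M]
    [Module.Finite C M] [Nontrivial M]
    (hext : ∀ i < n, Subsingleton (Ext (ModuleCat.of D (D ⊗[C] (C ⧸ IsLocalRing.maximalIdeal C)))
      (ModuleCat.of D (D ⊗[C] M)) i)) :
    ∃ rs : List C, rs.length = n ∧ (∀ r ∈ rs, r ∈ IsLocalRing.maximalIdeal C) ∧
      IsRegular M rs := by
  induction n generalizing M with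
  | zero => exact ⟨[], by simp [isRegular_iff]⟩
  | succ n ih =>
    have h0 : Subsingleton ((C ⧸ IsLocalRing.maximalIdeal C) →ₗ[C] M) := by
      have h1 := Ext.addEquiv₀.subsingleton_congr.mp (hext 0 n.zero_lt_succ)
      have h2 : Subsingleton (D ⊗[C] (C ⧸ IsLocalRing.maximalIdeal C) →ₗ[D] D ⊗[C] M) :=
        (ModuleCat.homAddEquiv (M := ModuleCat.of D (D ⊗[C] (C ⧸ IsLocalRing.maximalIdeal C)))
          (N := ModuleCat.of D (D ⊗[C] M))).symm.subsingleton
      refine ⟨fun f g => ?_⟩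
      have h3 : f.baseChange D = g.baseChange D := Subsingleton.elim _ _
      ext
      apply Module.FaithfullyFlat.tensorProduct_mk_injective (A := C) (B := D) M
      simpa using LinearMap.congr_fun h3 (1 ⊗ₜ 1)
    obtain ⟨x, hx, hreg⟩ := IsSMulRegular.subsingleton_linearMap_iff.mp h0
    rw [Ideal.annihilator_quotient] at hx
    have hnt : Nontrivial (QuotSMulTop x M) := by
      refine Submodule.Quotient.nontrivial_iff.mpr fun h => ?_
      rw [← Submodule.ideal_span_singleton_smul] at h
      have := Submodule.eq_bot_of_le_smul_of_le_jacobson_bot (Ideal.span {x}) (⊤ : Submodule C M)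
        Module.Finite.fg_top h.ge
        (by rw [IsLocalRing.jacobson_eq_maximalIdeal _ bot_ne_top]
            rwa [Ideal.span_singleton_le_iff_mem])
      exact top_ne_bot this
    have hregD : IsSMulRegular (D ⊗[C] M) (algebraMap C D x) := by
      have := (RingTheory.Sequence.isWeaklyRegular_singleton_iff M x).mpr hreg
      have := this.of_flat_of_isBaseChange (S := D) (TensorProduct.isBaseChange C M D)
      simpa using this
    let e := QuotSMulTop.algebraMapTensorEquivTensorQuotSMulTop x M D
    obtain ⟨rs, len, mem, reg⟩ := ih (QuotSMulTop x M) (by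
      intro i hi
      have hs : Subsingleton (Ext (ModuleCat.of D (D ⊗[C] (C ⧸ IsLocalRing.maximalIdeal C)))
          (ModuleCat.of D (QuotSMulTop (algebraMap C D x) (D ⊗[C] M))) i) := by
        have zero1 := AddCommGrpCat.isZero_of_iff_subsingleton.mpr (hext i (by omega))
        have zero2 := AddCommGrpCat.isZero_of_iff_subsingleton.mpr (hext (i + 1) (by omega))
        exact AddCommGrpCat.subsingleton_of_isZero <| ShortComplex.Exact.isZero_of_both_zeros
          ((Ext.covariant_sequence_exact₃' _
            (IsSMulRegular.smulShortComplex_shortExact (M := ModuleCat.of D (D ⊗[C] M)) hregD))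
            i (i + 1) rfl)
          (zero1.eq_zero_of_src _) (zero2.eq_zero_of_tgt _)
      have hs' : Subsingleton ((extFunctorObj (ModuleCat.of D
          (D ⊗[C] (C ⧸ IsLocalRing.maximalIdeal C))) i).obj
          (ModuleCat.of D (QuotSMulTop (algebraMap C D x) (D ⊗[C] M)))) := hs
      exact (((extFunctorObj _ i).mapIso e.toModuleIso).addCommGroupIsoToAddEquiv).symm.subsingleton)
    refine ⟨x :: rs, by simp [len], List.forall_mem_cons.mpr ⟨hx, mem⟩, ?_⟩
    exact (isRegular_cons_iff M x rs).mpr ⟨hreg, reg⟩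

section general
variable {C D : Type} [CommRing C] [CommRing D] [Algebra C D]

lemma eq_of_map_le_of_le [Algebra.IsIntegral C D] (Q q : Ideal D) [Q.IsPrime] [q.IsPrime]
    (hqQ : q ≤ Q) (h : (Q.under C).map (algebraMap C D) ≤ q) : q = Q := by
  by_contra hne
  have hlt := Ideal.IsIntegral.comap_lt_comap (R := C) (lt_of_le_of_ne hqQ hne)
  exact hlt.not_ge (Ideal.map_le_iff_le_comap.mp h)

lemma height_eq_height_under [IsNoetherianRing C] [IsNoetherianRing D]
    [Algebra.IsIntegral C D] [Module.Flat C D] (Q : Ideal D) [Q.IsPrime] :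
    Q.height = (Q.under C).height := by
  rw [Ideal.height_eq_height_add_of_liesOver_of_hasGoingDown (Q.under C) Q]
  have hle : (Q.under C).map (algebraMap C D) ≤ Q := Ideal.map_comap_le
  have : (Q.map (Ideal.Quotient.mk <| (Q.under C).map (algebraMap C D))).IsPrime :=
    Ideal.map_isPrime_of_surjective Ideal.Quotient.mk_surjective (by simpa using hle)
  have h0 : (Q.map (Ideal.Quotient.mk <| (Q.under C).map (algebraMap C D))).height = 0 := by
    rw [Ideal.height_eq_zero_iff, minimalPrimes_eq_minimals]
    refine ⟨this, fun q hq hqle => ?_⟩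
    have hq' : q.IsPrime := hq
    have := eq_of_map_le_of_le (C := C) Q (q.comap (Ideal.Quotient.mk _)) 
      (by
        refine (Ideal.comap_mono hqle).trans ?_
        rw [Ideal.comap_map_of_surjective _ Ideal.Quotient.mk_surjective]
        simpa [← RingHom.ker_eq_comap_bot] using hle)
      (by
        intro x hx
        rw [Ideal.mem_comap, Ideal.Quotient.eq_zero_iff_mem.mpr hx]
        exact q.zero_mem)
    rw [Ideal.map_le_iff_le_comap, this]
  rw [h0, add_zero]

lemma isCM_local_iff [IsNoetherianRing C] [IsNoetherianRing D]
    [Algebra.IsIntegral C D] [Module.Flat C D] (P : Ideal C) [P.IsPrime]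
    (Q : Ideal D) [Q.IsPrime] [hPQ : Q.LiesOver P] :
    IsCohenMacaulayLocalRing (Localization.AtPrime P) ↔
      IsCohenMacaulayLocalRing (Localization.AtPrime Q) := by
  let := Localization.AtPrime.algebraOfLiesOver P Q
  have hloc : IsLocalHom (algebraMap (Localization.AtPrime P) (Localization.AtPrime Q)) := by
    rw [RingHom.algebraMap_toAlgebra]
    exact Localization.isLocalHom_localRingHom P Q (algebraMap C D) Ideal.LiesOver.over
  have hff : Module.FaithfullyFlat (Localization.AtPrime P) (Localization.AtPrime Q) :=
    Module.FaithfullyFlat.of_flat_of_isLocalHom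
  have hdim : ringKrullDim (Localization.AtPrime Q) = ringKrullDim (Localization.AtPrime P) := by
    rw [IsLocalization.AtPrime.ringKrullDim_eq_height Q,
      IsLocalization.AtPrime.ringKrullDim_eq_height P, height_eq_height_under (C := C) Q,
      ← hPQ.over]
  constructor
  · rintro ⟨n, rs, hn, hlen, hmem, hreg⟩
    refine ⟨n, rs.map (algebraMap _ _), hdim.trans hn, by simpa using hlen, ?_,
      hreg.of_faithfullyFlat⟩
    intro x hx
    obtain ⟨y, hy, rfl⟩ := List.mem_map.mp hx
    rw [IsLocalRing.mem_maximalIdeal, mem_nonunits_iff]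
    exact fun hu => (hmem y hy) (isUnit_of_map_unit _ y hu)
  · rintro ⟨n, rs, hn, hlen, hmem, hreg⟩
    let C' := Localization.AtPrime P
    let D' := Localization.AtPrime Q
    let e : D' ⊗[C'] C' ≃ₗ[D'] D' := TensorProduct.AlgebraTensorModule.rid C' D' D'
    have key := ModuleCat.subsingleton_ext_of_exists_isRegular (IsLocalRing.maximalIdeal D')
      (ModuleCat.of D' (D' ⊗[C'] (C' ⧸ IsLocalRing.maximalIdeal C'))) (by
        intro q hq
        have hann := Module.mem_support_iff_of_finite.mp hq
        have hle : (IsLocalRing.maximalIdeal C').map (algebraMap C' D') ≤ q.asIdeal := by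
          refine le_trans (Ideal.map_le_iff_le_comap.mpr fun c hc => ?_) hann
          rw [Ideal.mem_comap, Module.mem_annihilator]
          intro z
          change algebraMap C' D' c • (z : D' ⊗[C'] (C' ⧸ IsLocalRing.maximalIdeal C')) = 0
          rw [algebraMap_smul]
          induction z using TensorProduct.induction_on with
          | zero => simp
          | add x y hx hy => rw [smul_add, hx, hy, add_zero]
          | tmul x y =>
            obtain ⟨y, rfl⟩ := Ideal.Quotient.mk_surjective y
            rw [← TensorProduct.tmul_smul, Algebra.smul_def, Ideal.Quotient.algebraMap_eq,
              Ideal.Quotient.eq_zero_iff_mem.mpr hc, zero_mul, TensorProduct.tmul_zero]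
        have hqQ : q.asIdeal.under D ≤ Q := by
          have := Ideal.comap_mono (f := algebraMap D D') (IsLocalRing.le_maximalIdeal q.2.ne_top)
          exact this.trans (IsLocalization.AtPrime.under_maximalIdeal D' Q).le
        have heq := eq_of_map_le_of_le (C := C) Q (q.asIdeal.under D) hqQ (by
          rw [← hPQ.over]
          refine Ideal.map_le_iff_le_comap.mpr fun c hc => ?_
          change algebraMap D D' (algebraMap C D c) ∈ q.asIdeal
          rw [← IsScalarTower.algebraMap_apply C D D', IsScalarTower.algebraMap_apply C C' D']
          refine hle (Ideal.mem_map_of_mem _ ?_)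
          rwa [IsLocalization.AtPrime.to_map_mem_maximal_iff C' P])
        rw [PrimeSpectrum.mem_zeroLocus]
        rw [← Localization.AtPrime.map_eq_maximalIdeal]
        refine Ideal.map_le_iff_le_comap.mpr heq.ge) (ModuleCat.of D' (D' ⊗[C'] C')) (by
        have : IsLocalRing.maximalIdeal D' • (⊤ : Submodule D' (D' ⊗[C'] C')) ≠ ⊤ := fun h => by
          have := Submodule.eq_bot_of_le_smul_of_le_jacobson_bot (IsLocalRing.maximalIdeal D')
            (⊤ : Submodule D' (D' ⊗[C'] C')) Module.Finite.fg_top h.ge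
            (IsLocalRing.jacobson_eq_maximalIdeal _ bot_ne_top).ge
          have hnt : Nontrivial (D' ⊗[C'] C') := e.toEquiv.nontrivial
          exact top_ne_bot this
        exact this.lt_top) rs hmem ((e.isRegular_congr rs).mpr hreg)
    obtain ⟨rs', hlen', hmem', hreg'⟩ := exists_isRegular_of_ext_baseChange (D := D') n C'
      (by rw [← hlen]; exact key)
    exact ⟨n, rs', hdim.symm.trans hn, hlen', hmem', hreg'⟩

theorem isCM_iff_of_faithfullyFlat_of_finite [Module.Finite C D] [Module.FaithfullyFlat C D] :
    IsCohenMacaulayRing C ↔ IsCohenMacaulayRing D := by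
  constructor
  · rintro ⟨hN, h⟩
    have hN' : IsNoetherianRing D := IsNoetherianRing.of_finite C D
    refine ⟨hN', fun Q hQ => ?_⟩
    exact (isCM_local_iff (Q.under C) Q).mp (h _ inferInstance)
  · rintro ⟨hN, h⟩
    have hN' : IsNoetherianRing C := by
      rw [isNoetherianRing_iff, isNoetherian_iff']
      have hm : StrictMono (Ideal.map (algebraMap C D)) :=
        (Monotone.strictMono_of_injective (fun _ _ h => Ideal.map_mono h)
          Ideal.map_injective_of_faithfullyFlat)
      exact hm.wellFoundedGT
    refine ⟨hN', fun P hP => ?_⟩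
    obtain ⟨Q, hQ, hQP⟩ := Ideal.exists_isPrime_liesOver_of_faithfullyFlat (B := D) P
    exact (isCM_local_iff P Q).mpr (h Q hQ)
end general

end PartA

section PartB
open Polynomial

/-- Kaplansky's `u, u⁻¹` lemma. -/
lemma mem_or_inv_mem_of_root {V K : Type} [CommRing V] [IsDomain V] [IsLocalRing V]
    [IsIntegrallyClosed V] [Field K] [Algebra V K] [IsFractionRing V K] (x : K)
    (n : ℕ) (f : V[X]) (hn : f.natDegree ≤ n) (hf : aeval x f = 0) (i : ℕ)
    (hi : IsUnit (f.coeff i)) :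
    IsLocalization.IsInteger V x ∨ IsLocalization.IsInteger V x⁻¹ := by
  induction n generalizing f i with
  | zero =>
    exfalso
    rw [Polynomial.eq_C_of_natDegree_le_zero hn] at hf hi
    rw [aeval_C, FaithfulSMul.algebraMap_eq_zero_iff] at hf
    rw [hf] at hi
    simp at hi
  | succ n ih =>
    rcases lt_or_eq_of_le hn with h | h
    · exact ih f (by omega) hf i hi
    obtain ⟨c, hc⟩ := IsIntegrallyClosed.isIntegral_iff.mp (isIntegral_leadingCoeff_smul f x hf)
    rw [Algebra.smul_def] at hc
    by_cases ha : IsUnit f.leadingCoeff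
    · left
      obtain ⟨u, hu⟩ := ha
      refine ⟨↑u⁻¹ * c, ?_⟩
      rw [map_mul, hc, ← hu, ← mul_assoc, ← map_mul]
      simp
    by_cases hcu : IsUnit c
    · right
      obtain ⟨u, rfl⟩ := hcu
      refine ⟨↑u⁻¹ * f.leadingCoeff, ?_⟩
      refine eq_inv_of_mul_eq_one_left ?_
      rw [map_mul, mul_assoc, ← hc, ← map_mul]
      simp
    have hfe : f.eraseLead + C f.leadingCoeff * X ^ (n + 1) = f := by
      rw [← h]; exact f.eraseLead_add_C_mul_X_pow
    have hil : i ≠ n + 1 := by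
      rintro rfl
      rw [← h] at hi
      exact ha hi
    have hcoeff : f.eraseLead.coeff i = f.coeff i := eraseLead_coeff_of_ne i (by omega)
    refine ih (f.eraseLead + C c * X ^ n) ?_ ?_ i ?_
    · refine natDegree_add_le_of_degree_le ?_ (natDegree_C_mul_X_pow_le c n)
      have := f.eraseLead_natDegree_le
      omega
    · rw [← hf]
      conv_rhs => rw [← hfe]
      simp only [map_add, map_mul, aeval_C, map_pow, aeval_X, hc]
      ring
    · rw [coeff_add, hcoeff, coeff_C_mul_X_pow]
      split_ifs
      · by_contra hcon
        have hm : f.coeff i + c ∈ IsLocalRing.maximalIdeal V := hcon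
        have hcm : c ∈ IsLocalRing.maximalIdeal V := hcu
        exact ((IsLocalRing.maximalIdeal V).add_mem_iff_left hcm).mp hm hi
      · simpa using hi

/-- The localizations of an integrally closed integral extension of a PID are valuation rings. -/
lemma valuationRing_localization {O A : Type} [CommRing O] [IsDomain O] [IsPrincipalIdealRing O]
    [CommRing A] [IsDomain A] [IsIntegrallyClosed A] [Algebra O A] [Algebra.IsIntegral O A]
    (hinj : Function.Injective (algebraMap O A)) (P : Ideal A) [P.IsPrime] :
    ValuationRing (Localization.AtPrime P) := by
  let V := Localization.AtPrime P
  let K := FractionRing A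
  let : Algebra V K := IsLocalization.localizationAlgebraOfSubmonoidLe V K P.primeCompl
    (nonZeroDivisors A) P.primeCompl_le_nonZeroDivisors
  have : IsScalarTower A V K := IsLocalization.localization_isScalarTower_of_submonoid_le V K
    P.primeCompl (nonZeroDivisors A) P.primeCompl_le_nonZeroDivisors
  have : IsFractionRing V K := IsFractionRing.isFractionRing_of_isDomain_of_isLocalization
    P.primeCompl V K
  have : IsDomain V := IsLocalization.isDomain_localization P.primeCompl_le_nonZeroDivisors
  have : IsIntegrallyClosed V := isIntegrallyClosed_of_isLocalization V P.primeCompl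
    P.primeCompl_le_nonZeroDivisors
  classical
  let : NormalizedGCDMonoid O := Classical.choice (inferInstance : Nonempty (NormalizedGCDMonoid O))
  have hinjK : Function.Injective (algebraMap O K) := by
    rw [IsScalarTower.algebraMap_eq O A K]
    exact (IsFractionRing.injective A K).comp hinj
  have : FaithfulSMul O K := (faithfulSMul_iff_algebraMap_injective O K).mpr hinjK
  refine (ValuationRing.iff_isInteger_or_isInteger V K).mpr fun x => ?_
  by_cases hx : x = 0
  · left; rw [hx]; exact ⟨0, map_zero _⟩
  have halg : IsAlgebraic O x := by
    have : FaithfulSMul O A := (faithfulSMul_iff_algebraMap_injective O A).mpr hinj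
    have : Algebra.IsAlgebraic O K := by
      have : Algebra.IsAlgebraic A K := IsLocalization.isAlgebraic K (nonZeroDivisors A)
      exact Algebra.IsAlgebraic.trans O A K
    exact Algebra.IsAlgebraic.isAlgebraic x
  obtain ⟨f, hf0, hf⟩ := halg
  have hg : aeval x f.primPart = 0 := by
    rw [f.eq_C_content_mul_primPart, map_mul, aeval_C] at hf
    refine (mul_eq_zero.mp hf).resolve_left ?_
    rw [FaithfulSMul.algebraMap_eq_zero_iff]
    exact fun h => hf0 (content_eq_zero_iff.mp h)
  obtain ⟨i, hi⟩ : ∃ i, f.primPart.coeff i ∉ P.under O := by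
    by_contra! hcon
    obtain ⟨π, hπ⟩ := IsPrincipalIdealRing.principal (P.under O)
    have hdvd : C π ∣ f.primPart := by
      rw [C_dvd_iff_dvd_coeff]
      intro i
      have := hcon i
      rwa [hπ, Ideal.submodule_span_eq, Ideal.mem_span_singleton] at this
    have hu := f.isPrimitive_primPart π hdvd
    have hne : P.under O ≠ ⊤ := Ideal.IsPrime.ne_top inferInstance
    rw [hπ, Ideal.submodule_span_eq] at hne
    exact hne (Ideal.span_singleton_eq_top.mpr hu)
  refine mem_or_inv_mem_of_root x _ (f.primPart.map (algebraMap O V)) le_rfl ?_ i ?_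
  · have : IsScalarTower O V K := IsScalarTower.to₁₃₄ O A V K
    rw [aeval_map_algebraMap, hg]
  · rw [coeff_map, IsScalarTower.algebraMap_apply O A V]
    exact IsLocalization.map_units V (⟨_, hi⟩ : P.primeCompl)

lemma flat_of_isRingOfIntegers {A B : Type} [CommRing A] [CommRing B] [IsDomain B] [Algebra A B]
    (hA : IsRingOfIntegersOfGlobalField A)
    (hinj : Function.Injective (algebraMap A B)) : Module.Flat A B := by
  have hdom : IsDomain A := hinj.isDomain (algebraMap A B)
  have hfs : FaithfulSMul A B := (faithfulSMul_iff_algebraMap_injective A B).mpr hinj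
  have htf : Module.IsTorsionFree A B := inferInstance
  rcases hA with ⟨⟨K, hK, e⟩⟩ | ⟨⟨Fq, K, hK, e⟩⟩
  · rw [Module.Flat.flat_iff_torsion_eq_bot_of_valuationRing_localization_isMaximal,
      ← Submodule.isTorsionFree_iff_torsion_eq_bot]
    · infer_instance
    intro P hP
    have hinjZ : Function.Injective (algebraMap ℤ A) := by
      have h : (e : A →+* NumberField.RingOfIntegers K).comp (algebraMap ℤ A) =
          algebraMap ℤ (NumberField.RingOfIntegers K) := RingHom.ext_int _ _
      have h' : Function.Injective (algebraMap ℤ (NumberField.RingOfIntegers K)) :=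
        FaithfulSMul.algebraMap_injective _ _
      rw [← h, RingHom.coe_comp] at h'
      exact h'.of_comp
    have : IsIntegrallyClosed A := IsIntegrallyClosed.of_equiv e.symm
    have : Algebra.IsIntegral ℤ A := ⟨fun a => by
      have h : IsIntegral ℤ (e a) := NumberField.RingOfIntegers.isIntegral (e a)
      simpa using map_isIntegral_int (e.symm : NumberField.RingOfIntegers K →+* A) h⟩
    exact valuationRing_localization hinjZ P
  · rw [Module.Flat.flat_iff_torsion_eq_bot_of_valuationRing_localization_isMaximal,
      ← Submodule.isTorsionFree_iff_torsion_eq_bot]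
    · infer_instance
    intro P hP
    let φ : Fq[X] →+* A :=
      (e.symm : FunctionField.ringOfIntegers Fq K →+* A).comp (algebraMap Fq[X] _)
    let : Algebra Fq[X] A := φ.toAlgebra
    have hinjφ : Function.Injective (algebraMap Fq[X] A) :=
      e.symm.injective.comp (FunctionField.ringOfIntegers.algebraMap_injective Fq K)
    have : IsIntegrallyClosed A := IsIntegrallyClosed.of_equiv e.symm
    have : Algebra.IsIntegral Fq[X] A := ⟨fun a => by
      have h : IsIntegral Fq[X] (e a) :=
        IsIntegralClosure.isIntegral Fq[X] K (e a)
      obtain ⟨p, hp, hp'⟩ := h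
      refine ⟨p, hp, e.injective ?_⟩
      rw [map_zero, ← hp', ← RingEquiv.coe_toRingHom, Polynomial.hom_eval₂]
      congr 1
      ext <;> simp [RingHom.algebraMap_toAlgebra, φ]⟩
    exact valuationRing_localization hinjφ P

lemma isDomain_of_isRingOfIntegers {A : Type} [CommRing A]
    (hA : IsRingOfIntegersOfGlobalField A) : IsDomain A := by
  rcases hA with ⟨⟨K, hK, e⟩⟩ | ⟨⟨Fq, K, hK, e⟩⟩
  · exact e.toMulEquiv.isDomain _
  · exact e.toMulEquiv.isDomain _

end PartB

section PartC

open TensorProduct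

section tensor
variable {A : Type} [CommRing A] {n : ℕ}

noncomputable def glAct (g : Matrix (Fin n) (Fin n) A) :
    MvPolynomial (Fin n) A →ₐ[A] MvPolynomial (Fin n) A :=
  MvPolynomial.aeval (fun i => ∑ j, g i j • MvPolynomial.X j)

variable (B : Type) [CommRing B] [Algebra A B]

lemma glAct_baseChange (g : Matrix (Fin n) (Fin n) A) (u : B ⊗[A] MvPolynomial (Fin n) A) :
    MvPolynomial.algebraTensorAlgEquiv A B ((glAct g).toLinearMap.lTensor B u) =
      glAct (g.map (algebraMap A B)) (MvPolynomial.algebraTensorAlgEquiv A B u) := by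
  have h : ((MvPolynomial.algebraTensorAlgEquiv (σ := Fin n) A B).toAlgHom.comp
      (Algebra.TensorProduct.map (AlgHom.id B B) (glAct g))) =
      (glAct (g.map (algebraMap A B))).comp
        (MvPolynomial.algebraTensorAlgEquiv (σ := Fin n) A B).toAlgHom := by
    ext i
    simp [glAct, TensorProduct.tmul_sum, Algebra.smul_def]
  exact DFunLike.congr_fun h u

variable (G : Subgroup (Matrix.GeneralLinearGroup (Fin n) A))

lemma mem_glInv_map (t : MvPolynomial (Fin n) B) :
    t ∈ glInvariants (G.map (Matrix.GeneralLinearGroup.map (algebraMap A B))) ↔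
      ∀ g ∈ G, glAct ((g : Matrix (Fin n) (Fin n) A).map (algebraMap A B)) t = t := by
  have key : ∀ g : Matrix.GeneralLinearGroup (Fin n) A,
      ((Matrix.GeneralLinearGroup.map (algebraMap A B) g : Matrix.GeneralLinearGroup (Fin n) B) :
        Matrix (Fin n) (Fin n) B) = (g : Matrix (Fin n) (Fin n) A).map (algebraMap A B) :=
    fun g => rfl
  have h0 : t ∈ glInvariants (G.map (Matrix.GeneralLinearGroup.map (algebraMap A B))) ↔
      ∀ g ∈ G.map (Matrix.GeneralLinearGroup.map (algebraMap A B)),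
        glAct (g : Matrix (Fin n) (Fin n) B) t = t := Iff.rfl
  rw [h0]
  constructor
  · intro h g hg
    rw [← key]
    exact h _ (Subgroup.mem_map_of_mem _ hg)
  · intro h g' hg'
    obtain ⟨g, hg, rfl⟩ := Subgroup.mem_map.mp hg'
    rw [key]
    exact h g hg

lemma map_mem_glInv (f : MvPolynomial (Fin n) A) (hf : f ∈ glInvariants G) :
    MvPolynomial.map (algebraMap A B) f ∈
      glInvariants (G.map (Matrix.GeneralLinearGroup.map (algebraMap A B))) := by
  rw [mem_glInv_map]
  intro g hg
  have h1 := glAct_baseChange B (g : Matrix (Fin n) (Fin n) A) (1 ⊗ₜ f)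
  have h2 : glAct (g : Matrix (Fin n) (Fin n) A) f = f := hf g hg
  simpa [h2] using h1.symm

noncomputable def glInvMap : glInvariants G →+*
    glInvariants (G.map (Matrix.GeneralLinearGroup.map (algebraMap A B))) :=
  ((MvPolynomial.map (algebraMap A B)).comp (glInvariants G).val.toRingHom).codRestrict _
    (fun f => map_mem_glInv B G f.1 f.2)

noncomputable def glDiff : MvPolynomial (Fin n) A →ₗ[A] (G → MvPolynomial (Fin n) A) :=
  LinearMap.pi fun g => (glAct (g.1 : Matrix (Fin n) (Fin n) A)).toLinearMap - LinearMap.id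

lemma glDiff_exact : Function.Exact (glInvariants G).val.toLinearMap (glDiff G) := by
  intro f
  constructor
  · intro h
    refine ⟨⟨f, fun g hg => ?_⟩, rfl⟩
    exact sub_eq_zero.mp (congrFun h ⟨g, hg⟩)
  · rintro ⟨f, rfl⟩
    funext g
    exact sub_eq_zero.mpr (f.2 g.1 g.2)

lemma exists_of_mem_glInv [Finite G] [Module.Flat A B] (t : MvPolynomial (Fin n) B)
    (ht : t ∈ glInvariants (G.map (Matrix.GeneralLinearGroup.map (algebraMap A B)))) :
    ∃ u : B ⊗[A] glInvariants G, MvPolynomial.algebraTensorAlgEquiv A B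
      ((glInvariants G).val.toLinearMap.lTensor B u) = t := by
  classical
  have := Fintype.ofFinite G
  obtain ⟨v, rfl⟩ := (MvPolynomial.algebraTensorAlgEquiv (σ := Fin n) A B).surjective t
  rw [mem_glInv_map] at ht
  have hv : (glDiff G).lTensor B v = 0 := by
    apply (TensorProduct.piRight A A B (fun _ : G => MvPolynomial (Fin n) A)).injective
    rw [map_zero]
    funext g
    have h1 : ∀ v, TensorProduct.piRight A A B (fun _ : G => MvPolynomial (Fin n) A)
        ((glDiff G).lTensor B v) g = 
        ((glAct (g.1 : Matrix (Fin n) (Fin n) A)).toLinearMap.lTensor B v) - v := by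
      intro v
      induction v using TensorProduct.induction_on with
      | zero => simp
      | tmul x y => simp [glDiff, TensorProduct.tmul_sub]
      | add x y hx hy =>
        rw [map_add, map_add, Pi.add_apply, hx, hy, map_add]
        abel
    rw [h1]
    apply (MvPolynomial.algebraTensorAlgEquiv (σ := Fin n) A B).injective
    rw [map_sub, glAct_baseChange, ht g.1 g.2]
    simp
  obtain ⟨u, hu⟩ := (Module.Flat.lTensor_exact B (glDiff_exact G) v).mp hv
  exact ⟨u, by rw [hu]⟩

lemma glInv_linearEquiv [Finite G] [Module.Flat A B] :
    letI := (glInvMap B G).toAlgebra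
    Nonempty (glInvariants G ⊗[A] B ≃ₗ[glInvariants G]
      glInvariants (G.map (Matrix.GeneralLinearGroup.map (algebraMap A B)))) := by
  let := (glInvMap B G).toAlgebra
  have : IsScalarTower A (glInvariants G)
      (glInvariants (G.map (Matrix.GeneralLinearGroup.map (algebraMap A B)))) :=
    IsScalarTower.of_algebraMap_eq fun a => Subtype.ext (by
      change algebraMap A (MvPolynomial (Fin n) B) a =
        MvPolynomial.map (algebraMap A B) (MvPolynomial.C a)
      rw [MvPolynomial.map_C]
      rfl)
  let ψ : glInvariants G ⊗[A] B →ₐ[glInvariants G]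
      glInvariants (G.map (Matrix.GeneralLinearGroup.map (algebraMap A B))) :=
    Algebra.TensorProduct.lift (Algebra.ofId _ _) (IsScalarTower.toAlgHom A B _)
      (fun _ _ => Commute.all _ _)
  have hψ : ∀ u : B ⊗[A] glInvariants G, (ψ (TensorProduct.comm A _ _ u) : MvPolynomial (Fin n) B) =
      MvPolynomial.algebraTensorAlgEquiv A B
        ((glInvariants G).val.toLinearMap.lTensor B u) := by
    intro u
    induction u using TensorProduct.induction_on with
    | zero => simp
    | tmul x y =>
      have h1 : ψ (TensorProduct.comm A _ _ (x ⊗ₜ[A] y)) =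
          glInvMap B G y * algebraMap B _ x := by
        simp [ψ, Algebra.ofId_apply, RingHom.algebraMap_toAlgebra]
      rw [h1]
      change MvPolynomial.map (algebraMap A B) y.1 * MvPolynomial.C x = _
      simp [MvPolynomial.smul_eq_C_mul, mul_comm]
    | add x y hx hy => simp [hx, hy]
  refine ⟨LinearEquiv.ofBijective ψ.toLinearMap ⟨?_, ?_⟩⟩
  · intro x y hxy
    obtain ⟨x, rfl⟩ := (TensorProduct.comm A _ _).surjective x
    obtain ⟨y, rfl⟩ := (TensorProduct.comm A _ _).surjective y
    congr 1
    have h := congrArg Subtype.val hxy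
    have h' := (hψ x).symm.trans (h.trans (hψ y))
    exact Module.Flat.lTensor_preserves_injective_linearMap (M := B)
      (glInvariants G).val.toLinearMap Subtype.val_injective
      ((MvPolynomial.algebraTensorAlgEquiv (σ := Fin n) A B).injective h')
  · intro t
    obtain ⟨u, hu⟩ := exists_of_mem_glInv B G t.1 t.2
    exact ⟨TensorProduct.comm A _ _ u, Subtype.ext ((hψ u).trans hu)⟩
end tensor

end PartC

open TensorProduct in
lemma isCM_iff_of_tensor_equiv {A B C D : Type} [CommRing A] [CommRing B] [CommRing C] [CommRing D]
    [Algebra A B] [Algebra A C] [Algebra C D] [Module.Finite A B] [Module.FaithfullyFlat A B]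
    (e : C ⊗[A] B ≃ₗ[C] D) : IsCohenMacaulayRing C ↔ IsCohenMacaulayRing D := by
  have hfin : Module.Finite C D := Module.Finite.equiv e
  have hff' : Module.FaithfullyFlat C D := Module.FaithfullyFlat.of_linearEquiv _ _ e.symm
  exact isCM_iff_of_faithfullyFlat_of_finite

/-- **Base change.** Let `A ⊆ B` be rings of integers of global fields with `B` a finitely
generated `A`-module. Let `G ⊆ GL_n(A)`, regarded also as a subgroup of `GL_n(B)`, act
linearly on `R = A[X_1, …, X_n]` and on `T = B[X_1, …, X_n]`. Then `R^G` is Cohen–Macaulay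
if and only if `T^G` is Cohen–Macaulay. -/
theorem invariants_cohenMacaulay_iff_baseChange
    (A B : Type) [CommRing A] [CommRing B] [Algebra A B]
    (hA : IsRingOfIntegersOfGlobalField A) (hB : IsRingOfIntegersOfGlobalField B)
    (hinj : Function.Injective (algebraMap A B)) [Module.Finite A B]
    (n : ℕ) (G : Subgroup (Matrix.GeneralLinearGroup (Fin n) A)) [Finite ↥G] :
    IsCohenMacaulayRing ↥(glInvariants G) ↔
      IsCohenMacaulayRing
        ↥(glInvariants (G.map (Matrix.GeneralLinearGroup.map (algebraMap A B)))) := by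
  have hdomB : IsDomain B := isDomain_of_isRingOfIntegers hB
  have hflat : Module.Flat A B := flat_of_isRingOfIntegers hA hinj
  have hfs : FaithfulSMul A B := (faithfulSMul_iff_algebraMap_injective A B).mpr hinj
  have hff : Module.FaithfullyFlat A B := inferInstance
  let := (glInvMap B G).toAlgebra
  obtain ⟨e⟩ := glInv_linearEquiv B G
  exact isCM_iff_of_tensor_equiv e
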